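/- Let χ_Λ be a smooth cutoff supported in {ρ ≤ Λ}, 0 ≤ χ_Λ ≤ 1. There is C > 0 such that for all 0 < α < 1 and L > 1, with y = L/α, |∫₀^∞ χ_Λ(σ/y)² · σ/(yα² + σ) · (2 sin(2σ) + cos(2σ)/σ − sin(2σ)/(2σ²)) dσ| ≤ C, and consequently the quantity J = −(2/(πy)) times this integral satisfies J = O(α/L). -/

import Mathlib

open Real MeasureTheory

/-- The continuous extension of `sin (2σ) / (2σ) - cos (2σ)` to the origin; it is a bounded primitive of
`2 sin (2σ) + cos (2σ) / σ - sin (2σ) / (2σ²)`. -/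
noncomputable def oscillatoryPrimitive (σ : ℝ) : ℝ := sinc (2 * σ) - cos (2 * σ)

lemma continuous_oscillatoryPrimitive : Continuous oscillatoryPrimitive := by
  unfold oscillatoryPrimitive
  exact (continuous_sinc.comp (continuous_const.mul continuous_id)).sub (by fun_prop)

lemma oscillatoryPrimitive_zero : oscillatoryPrimitive 0 = 0 := by
  simp [oscillatoryPrimitive]

lemma abs_oscillatoryPrimitive_le (σ : ℝ) : |oscillatoryPrimitive σ| ≤ 2 := by
  unfold oscillatoryPrimitive
  rw [abs_le]
  constructor <;>
    linarith [sinc_le_one (2 * σ), neg_one_le_sinc (2 * σ), cos_le_one (2 * σ),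
      neg_one_le_cos (2 * σ)]

lemma hasDerivAt_oscillatoryPrimitive {σ : ℝ} (hσ : 0 < σ) :
    HasDerivAt oscillatoryPrimitive
      (2 * sin (2 * σ) + cos (2 * σ) / σ - sin (2 * σ) / (2 * σ ^ 2)) σ := by
  have hlin : HasDerivAt (fun s : ℝ => 2 * s) 2 σ := by
    simpa using (hasDerivAt_id σ).const_mul 2
  have hquot := (hlin.sin.div hlin (by positivity)).sub hlin.cos
  refine (hquot.congr_of_eventuallyEq ?_).congr_deriv ?_
  · filter_upwards [lt_mem_nhds hσ] with s hs
    simp [oscillatoryPrimitive, sinc_of_ne_zero (show 2 * s ≠ 0 by positivity)]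
  · field_simp
    ring

lemma abs_mul_cos_sub_sin_le {x : ℝ} (hx : 0 < x) : |x * cos x - sin x| ≤ 2 * x ^ 2 := by
  rcases le_or_gt x 1 with h | h
  · have hcube : x ^ 3 ≤ x ^ 2 := pow_le_pow_of_le_one hx.le h (by norm_num)
    have hsin := sin_le hx.le
    have hsin' := sin_gt_sub_cube hx
    have hcos := mul_le_mul_of_nonneg_left (one_sub_sq_div_two_le_cos (x := x)) hx.le
    have hcos' := mul_le_mul_of_nonneg_left (cos_le_one x) hx.le
    have hpos : 0 < x ^ 3 := by positivity
    rw [abs_le]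
    constructor <;> nlinarith
  · have hcos := mul_le_mul_of_nonneg_left (neg_one_le_cos x) hx.le
    have hcos' := mul_le_mul_of_nonneg_left (cos_le_one x) hx.le
    rw [abs_le]
    constructor <;> nlinarith [sin_le_one x, neg_one_le_sin x]

lemma abs_deriv_oscillatoryPrimitive_le {σ : ℝ} (hσ : 0 < σ) :
    |2 * sin (2 * σ) + cos (2 * σ) / σ - sin (2 * σ) / (2 * σ ^ 2)| ≤ 6 := by
  have hsplit : 2 * sin (2 * σ) + cos (2 * σ) / σ - sin (2 * σ) / (2 * σ ^ 2) =
      2 * sin (2 * σ) + (2 * σ * cos (2 * σ) - sin (2 * σ)) / (2 * σ ^ 2) := by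
    field_simp
    ring
  have hsin : |2 * sin (2 * σ)| ≤ 2 := by
    rw [abs_mul, abs_two]
    linarith [abs_sin_le_one (2 * σ)]
  have hrest : |(2 * σ * cos (2 * σ) - sin (2 * σ)) / (2 * σ ^ 2)| ≤ 4 := by
    rw [abs_div, abs_of_pos (show 0 < 2 * σ ^ 2 by positivity), div_le_iff₀ (by positivity)]
    linarith [abs_mul_cos_sub_sin_le (show 0 < 2 * σ by positivity)]
  rw [hsplit]
  linarith [abs_add_le (2 * sin (2 * σ)) ((2 * σ * cos (2 * σ) - sin (2 * σ)) / (2 * σ ^ 2))]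

lemma intervalIntegrable_deriv_oscillatoryPrimitive {R : ℝ} (hR : 0 ≤ R) :
    IntervalIntegrable
      (fun σ : ℝ => 2 * sin (2 * σ) + cos (2 * σ) / σ - sin (2 * σ) / (2 * σ ^ 2))
      volume 0 R := by
  rw [intervalIntegrable_iff_integrableOn_Ioc_of_le hR]
  refine Measure.integrableOn_of_bounded (M := 6) measure_Ioc_lt_top.ne
    (by fun_prop : Measurable _).aestronglyMeasurable ?_
  filter_upwards [ae_restrict_mem measurableSet_Ioc] with σ hσ
  exact abs_deriv_oscillatoryPrimitive_le hσ.1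

/-- The amplitude `χ(σ/y)² σ/(a+σ)` and its derivative. -/
lemma hasDerivAt_cutoff_amplitude {χ : ℝ → ℝ} (hχ : Differentiable ℝ χ) {a y σ : ℝ}
    (hσ : a + σ ≠ 0) :
    HasDerivAt (fun s => χ (s / y) ^ 2 * (s / (a + s)))
      (2 * χ (σ / y) * (deriv χ (σ / y) / y) * (σ / (a + σ)) +
        χ (σ / y) ^ 2 * (a / (a + σ) ^ 2)) σ := by
  have hχ' : HasDerivAt (fun s => χ (s / y)) (deriv χ (σ / y) * (1 / y)) σ :=
    (hχ (σ / y)).hasDerivAt.comp σ ((hasDerivAt_id σ).div_const y)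
  have hquot := (hasDerivAt_id σ).div ((hasDerivAt_id σ).const_add a) hσ
  refine ((hχ'.pow 2).mul hquot).congr_deriv ?_
  simp only [Pi.pow_apply, Pi.div_apply, id_eq, Nat.cast_ofNat, Nat.add_one_sub_one, pow_one]
  ring

lemma abs_deriv_cutoff_amplitude_le {χ : ℝ → ℝ} (hχb : ∀ ρ, χ ρ ∈ Set.Icc (0 : ℝ) 1)
    {M a y σ : ℝ} (ha : 0 < a) (hy : 0 < y) (hσ : 0 ≤ σ) (hM : |deriv χ (σ / y)| ≤ M) :
    |2 * χ (σ / y) * (deriv χ (σ / y) / y) * (σ / (a + σ)) + χ (σ / y) ^ 2 * (a / (a + σ) ^ 2)|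
      ≤ 2 * M / y + a / (a + σ) ^ 2 := by
  obtain ⟨hχ0, hχ1⟩ := hχb (σ / y)
  have hM0 : 0 ≤ M := (abs_nonneg _).trans hM
  have hfrac : σ / (a + σ) ≤ 1 := (div_le_one (by positivity)).2 (by linarith)
  refine (abs_add_le _ _).trans (add_le_add ?_ ?_)
  · rw [abs_mul, abs_mul, abs_mul, abs_two, abs_of_nonneg hχ0, abs_div, abs_of_pos hy,
      abs_of_nonneg (show 0 ≤ σ / (a + σ) by positivity)]
    calc 2 * χ (σ / y) * (|deriv χ (σ / y)| / y) * (σ / (a + σ))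
        ≤ 2 * 1 * (M / y) * 1 := by gcongr
      _ = 2 * M / y := by ring
  · rw [abs_of_nonneg (by positivity)]
    exact mul_le_of_le_one_left (by positivity) (pow_le_one₀ hχ0 hχ1)

lemma integral_div_add_sq_le_one {a R : ℝ} (ha : 0 < a) (hR : 0 ≤ R) :
    ∫ σ in (0 : ℝ)..R, a / (a + σ) ^ 2 ≤ 1 := by
  have hpos : ∀ σ ∈ Set.uIcc 0 R, 0 < a + σ := fun σ hσ => by
    rw [Set.uIcc_of_le hR] at hσ
    linarith [hσ.1]
  have hprim : ∀ σ ∈ Set.uIcc 0 R,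
      HasDerivAt (fun s => s / (a + s)) (a / (a + σ) ^ 2) σ := fun σ hσ => by
    refine ((hasDerivAt_id σ).div ((hasDerivAt_id σ).const_add a) (hpos σ hσ).ne').congr_deriv ?_
    simp
  have hint : IntervalIntegrable (fun σ => a / (a + σ) ^ 2) volume 0 R :=
    ContinuousOn.intervalIntegrable <| continuousOn_const.div (by fun_prop)
      fun σ hσ => (pow_pos (hpos σ hσ) 2).ne'
  rw [intervalIntegral.integral_eq_sub_of_hasDerivAt hprim hint, zero_div, sub_zero]
  exact (div_le_one (by positivity)).2 (by linarith)

lemma abs_integral_cutoff_mul_oscillation_le {Λ M a y : ℝ} (hΛ : 0 < Λ) {χ : ℝ → ℝ}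
    (hχ : ContDiff ℝ 1 χ) (hχsupp : ∀ ρ, Λ < ρ → χ ρ = 0)
    (hχb : ∀ ρ, χ ρ ∈ Set.Icc (0 : ℝ) 1) (hM : ∀ ρ ∈ Set.Icc 0 Λ, |deriv χ ρ| ≤ M)
    (ha : 0 < a) (hy : 0 < y) :
    |∫ σ in Set.Ioi (0 : ℝ), χ (σ / y) ^ 2 * (σ / (a + σ)) *
        (2 * sin (2 * σ) + cos (2 * σ) / σ - sin (2 * σ) / (2 * σ ^ 2))|
      ≤ 2 * (2 * M * Λ + 1) := by
  have hR : 0 < Λ * y := by positivity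
  have hχΛ : χ Λ = 0 := by
    have hclosed : IsClosed {ρ | χ ρ = 0} := isClosed_eq hχ.continuous continuous_const
    have hsub : closure (Set.Ioi Λ) ⊆ {ρ | χ ρ = 0} := hclosed.closure_subset_iff.2 hχsupp
    rw [closure_Ioi] at hsub
    exact hsub (Set.mem_Ici.2 le_rfl)
  have hpos : ∀ σ ∈ Set.uIcc 0 (Λ * y), 0 < a + σ := fun σ hσ => by
    rw [Set.uIcc_of_le hR.le] at hσ
    linarith [hσ.1]
  have hamp := fun σ hσ =>
    hasDerivAt_cutoff_amplitude (y := y) (hχ.differentiable one_ne_zero) (hpos σ hσ).ne'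
  have hint : IntervalIntegrable (fun σ => 2 * χ (σ / y) * (deriv χ (σ / y) / y) * (σ / (a + σ)) +
      χ (σ / y) ^ 2 * (a / (a + σ) ^ 2)) volume 0 (Λ * y) := by
    have hχc := hχ.continuous
    have hχ'c := hχ.continuous_deriv le_rfl
    have hfrac : ContinuousOn (fun σ => σ / (a + σ)) (Set.uIcc 0 (Λ * y)) :=
      continuousOn_id.div (by fun_prop) fun σ hσ => (hpos σ hσ).ne'
    have hfrac' : ContinuousOn (fun σ => a / (a + σ) ^ 2) (Set.uIcc 0 (Λ * y)) :=
      continuousOn_const.div (by fun_prop) fun σ hσ => (pow_pos (hpos σ hσ) 2).ne'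
    refine ContinuousOn.intervalIntegrable (ContinuousOn.add (ContinuousOn.mul ?_ hfrac)
      (ContinuousOn.mul ?_ hfrac')) <;> exact Continuous.continuousOn (by fun_prop)
  have hparts := intervalIntegral.integral_mul_deriv_eq_deriv_mul_of_hasDeriv_right
    (fun σ hσ => (hamp σ hσ).continuousAt.continuousWithinAt)
    continuous_oscillatoryPrimitive.continuousOn
    (fun σ hσ => (hamp σ (Set.Ioo_subset_Icc_self hσ)).hasDerivWithinAt)
    (fun σ hσ => (hasDerivAt_oscillatoryPrimitive
      (by simpa [hR.le] using hσ.1)).hasDerivWithinAt)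
    hint (intervalIntegrable_deriv_oscillatoryPrimitive hR.le)
  rw [setIntegral_eq_of_subset_of_forall_sdiff_eq_zero (s := Set.Ioc 0 (Λ * y))
      measurableSet_Ioi Set.Ioc_subset_Ioi_self, ← intervalIntegral.integral_of_le hR.le, hparts,
    oscillatoryPrimitive_zero, mul_div_cancel_right₀ _ hy.ne', hχΛ]
  · have hdom : IntervalIntegrable (fun σ => a / (a + σ) ^ 2) volume 0 (Λ * y) :=
      ContinuousOn.intervalIntegrable <| continuousOn_const.div (by fun_prop)
        fun σ hσ => (pow_pos (hpos σ hσ) 2).ne'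
    have hbound := intervalIntegral.norm_integral_le_of_norm_le (μ := volume) hR.le
      (f := fun σ => (2 * χ (σ / y) * (deriv χ (σ / y) / y) * (σ / (a + σ)) +
        χ (σ / y) ^ 2 * (a / (a + σ) ^ 2)) * oscillatoryPrimitive σ)
      (g := fun σ => (2 * M / y + a / (a + σ) ^ 2) * 2)
      (Filter.Eventually.of_forall fun σ hσ => by
        have hle := abs_deriv_cutoff_amplitude_le hχb ha hy hσ.1.le
          (hM _ ⟨div_nonneg hσ.1.le hy.le, (div_le_iff₀ hy).2 hσ.2⟩)
        rw [norm_mul, norm_eq_abs, norm_eq_abs]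
        exact mul_le_mul hle (abs_oscillatoryPrimitive_le σ) (abs_nonneg _)
          ((abs_nonneg _).trans hle))
      ((intervalIntegrable_const.add hdom).mul_const 2)
    rw [intervalIntegral.integral_mul_const,
      intervalIntegral.integral_add intervalIntegrable_const hdom,
      intervalIntegral.integral_const, smul_eq_mul, norm_eq_abs] at hbound
    have hconst : (Λ * y - 0) * (2 * M / y) = 2 * M * Λ := by
      field_simp
      ring
    have hone := integral_div_add_sq_le_one ha hR.le
    simp only [ne_eq, OfNat.ofNat_ne_zero, not_false_eq_true, zero_pow, zero_mul, mul_zero,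
      sub_zero, zero_sub, abs_neg]
    linarith
  · intro σ hσ
    have hlt : Λ * y < σ := by
      by_contra hle
      exact hσ.2 ⟨hσ.1, not_lt.1 hle⟩
    simp [hχsupp _ ((lt_div_iff₀ hy).2 hlt)]

/-- Boundedness of the rescaled 1D oscillatory integral, with `y = L/α`:
`|∫₀^∞ χ_Λ(σ/y)² σ/(yα² + σ) (2 sin 2σ + cos 2σ/σ − sin 2σ/(2σ²)) dσ| ≤ C` uniformly in
`0 < α < 1`, `L > 1`; consequently `J = −(2/(πy))·(this integral) = O(α/L)`. -/
theorem oscillatory_integral_bounded (Λ : ℝ) (hΛ : 0 < Λ)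
    (χ : ℝ → ℝ) (hχ : ContDiff ℝ (⊤ : ℕ∞) χ) (hχsupp : ∀ ρ, Λ < ρ → χ ρ = 0)
    (hχb : ∀ ρ, χ ρ ∈ Set.Icc (0 : ℝ) 1) :
    ∃ C > (0 : ℝ), ∀ α L : ℝ, 0 < α → α < 1 → 1 < L →
      (|∫ σ in Set.Ioi (0 : ℝ), (χ (σ / (L / α))) ^ 2 * (σ / ((L / α) * α ^ 2 + σ)) *
          (2 * Real.sin (2 * σ) + Real.cos (2 * σ) / σ - Real.sin (2 * σ) / (2 * σ ^ 2))|
        ≤ C) ∧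
      (|(-(2 / (π * (L / α)))) *
          ∫ σ in Set.Ioi (0 : ℝ), (χ (σ / (L / α))) ^ 2 * (σ / ((L / α) * α ^ 2 + σ)) *
            (2 * Real.sin (2 * σ) + Real.cos (2 * σ) / σ - Real.sin (2 * σ) / (2 * σ ^ 2))|
        ≤ C * (α / L)) := by
  have hχ1 : ContDiff ℝ 1 χ := hχ.of_le (by exact_mod_cast le_top)
  obtain ⟨M, hM⟩ := isCompact_Icc.exists_bound_of_continuousOn (s := Set.Icc 0 Λ)
    (hχ1.continuous_deriv le_rfl).continuousOn
  have hM0 : 0 ≤ M := (norm_nonneg _).trans (hM 0 ⟨le_rfl, hΛ.le⟩)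
  refine ⟨2 * (2 * M * Λ + 1), by positivity, fun α L hα _ hL => ?_⟩
  have hL0 : 0 < L := by linarith
  have hbound := abs_integral_cutoff_mul_oscillation_le hΛ hχ1 hχsupp hχb hM
    (show 0 < L / α * α ^ 2 by positivity) (show 0 < L / α by positivity)
  refine ⟨hbound, ?_⟩
  have hfactor : 2 / (π * (L / α)) ≤ α / L := by
    rw [show 2 / (π * (L / α)) = 2 / π * (α / L) by field_simp]
    exact mul_le_of_le_one_left (by positivity) ((div_le_one pi_pos).2 two_le_pi)
  rw [abs_mul, abs_neg, abs_of_pos (show 0 < 2 / (π * (L / α)) by positivity),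
    mul_comm _ (α / L)]
  exact mul_le_mul hfactor hbound (abs_nonneg _) (by positivity)
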